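/- Let p be a prime and let a_1,…,a_k ∈ 𝔽_p be distinct. Then |∑_{x=0}^{p-1} ∏_{i=1}^{k} χ(x - a_i)| ≤ (k-1)√p, where χ is the Legendre symbol mod p (with χ(0) = 0). -/

import Mathlib

open Polynomial

/-- The polynomial `∑ α(j,i) X^{e(j,i)}`. -/
noncomputable def WB.mp {K : Type*} [Field K] {σ : Type*} [Fintype σ] (e : σ → ℕ) (α : σ → K) : K[X] :=
  ∑ s, monomial (e s) (α s)

lemma WB.mp_sub {K : Type*} [Field K] {σ : Type*} [Fintype σ] (e : σ → ℕ) (α β : σ → K) :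
    WB.mp e (fun s => α s - β s) = WB.mp e α - WB.mp e β := by
  simp [WB.mp, Finset.sum_sub_distrib]

lemma WB.mp_coeff {K : Type*} [Field K] {σ : Type*} [Fintype σ] (e : σ → ℕ)
    (he : Function.Injective e) (α : σ → K) (s : σ) : (WB.mp e α).coeff (e s) = α s := by
  classical
  simp only [WB.mp, finsetSum_coeff, coeff_monomial]
  rw [Finset.sum_eq_single s]
  · simp
  · intro b _ hb
    rw [if_neg (fun h => hb (he h))]
  · simp

lemma WB.mp_natDegree {K : Type*} [Field K] {σ : Type*} [Fintype σ] (e : σ → ℕ)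
    (α : σ → K) (h : WB.mp e α ≠ 0) : ∃ s, (WB.mp e α).natDegree = e s := by
  classical
  by_contra! hc
  have : (WB.mp e α).coeff (WB.mp e α).natDegree = 0 := by
    conv_lhs => rw [WB.mp, finsetSum_coeff]
    apply Finset.sum_eq_zero
    intro s _
    rw [coeff_monomial, if_neg]
    exact fun h => hc s h.symm
  rw [coeff_natDegree, leadingCoeff_eq_zero] at this
  exact h this

lemma WB.mp_degree_lt {K : Type*} [Field K] {σ : Type*} [Fintype σ] (e : σ → ℕ)
    (α : σ → K) (M : ℕ) (h : ∀ s, e s < M) : (WB.mp e α).degree < M := by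
  rw [WB.mp, ← Polynomial.mem_degreeLT]
  apply Submodule.sum_mem
  intro s _
  rw [Polynomial.mem_degreeLT]
  exact (degree_monomial_le _ _).trans_lt (by exact_mod_cast h s)

lemma WB.stepanov {K : Type*} [Field K] [Fintype K] [DecidableEq K] (p : ℕ) [Fact p.Prime]
    [CharP K p] (m u v : ℕ) (hQ : p ^ m = 2 * v + 1)
    (hcard : Fintype.card K = (2 * v + 1) ^ 2) (F : K[X]) (hF : F.natDegree = 2 * u + 1)
    (huv : u < v) (ε : K) :
    2 * (Finset.univ.filter (fun x : K => F.eval x ^ (2 * v * (v + 1)) = ε)).card ≤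
      (2 * v + 1) ^ 2 + 2 * (2 * u + 1) * (2 * v + 1) := by
  classical
  set Q := 2 * v + 1 with hQdef
  set J := v + u + 1 with hJ
  have hF0 : F ≠ 0 := by rintro rfl; simp at hF
  -- index types
  let e1 : Fin J × Fin (v + 1) → ℕ := fun s => s.1 * Q + s.2
  let e2 : Fin J × Fin (v - u) → ℕ := fun s => s.1 * Q + s.2
  let f1 : Fin J × Fin (v + 1) → ℕ := fun s => s.1 + s.2 * Q
  let f2 : Fin J × Fin (v - u) → ℕ := fun s => s.1 + s.2 * Q
  have inj : ∀ n, n ≤ Q → Function.Injective (fun s : Fin J × Fin n => (s.1 : ℕ) * Q + s.2) := by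
    rintro n hn ⟨⟨j, hj⟩, ⟨i, hi⟩⟩ ⟨⟨j', hj'⟩, ⟨i', hi'⟩⟩ h
    simp only at h
    have h1 : i = i' := by
      have := congrArg (· % Q) h
      simpa [Nat.add_mod, Nat.mod_eq_of_lt (hi.trans_le hn), Nat.mod_eq_of_lt (hi'.trans_le hn)] using this
    subst h1
    have h2 : j = j' := Nat.eq_of_mul_eq_mul_right (show 0 < Q by omega) (by omega)
    subst h2; rfl
  have inj1 : Function.Injective e1 := inj _ (by omega)
  have inj2 : Function.Injective e2 := inj _ (by omega)
  let E : (Fin J × Fin (v + 1) → K) × (Fin J × Fin (v - u) → K) → K[X] := fun s =>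
    WB.mp f1 (fun t => s.1 t ^ Q) + C ε * WB.mp f2 (fun t => s.2 t ^ Q) * F ^ (v + 1)
  let M := Q * v + J
  have hEdeg : ∀ s, (E s).degree < M := by
    intro s
    refine (degree_add_le _ _).trans_lt (max_lt ?_ ?_)
    · apply WB.mp_degree_lt
      rintro ⟨⟨j, hj⟩, ⟨i, hi⟩⟩
      simp only [f1, M]
      nlinarith [Nat.mul_le_mul_right Q (Nat.le_of_lt_succ hi)]
    · have h2 : (WB.mp f2 (fun t => s.2 t ^ Q)).degree < ((Q * (v - u - 1) + J : ℕ) : WithBot ℕ) := by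
        apply WB.mp_degree_lt
        rintro ⟨⟨j, hj⟩, ⟨i, hi⟩⟩
        simp only [f2]
        nlinarith [Nat.mul_le_mul_right Q (show i ≤ v - u - 1 by omega)]
      have hFd : (F ^ (v + 1)).degree = (((v + 1) * (2 * u + 1) : ℕ) : WithBot ℕ) := by
        rw [degree_eq_natDegree (pow_ne_zero _ hF0), natDegree_pow, hF]
      by_cases h0 : C ε * WB.mp f2 (fun t => s.2 t ^ Q) = 0
      · rw [h0, zero_mul, degree_zero]; exact WithBot.bot_lt_coe _
      · have h3 : (C ε * WB.mp f2 (fun t => s.2 t ^ Q)).degree < ((Q * (v - u - 1) + J : ℕ) : WithBot ℕ) := by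
          rw [degree_C_mul (by rintro rfl; simp at h0)]; exact h2
        rw [degree_mul, hFd]
        rw [degree_eq_natDegree h0] at h3 ⊢
        have h4 := Nat.cast_lt.1 h3
        norm_cast
        obtain ⟨w, rfl⟩ : ∃ w, v = u + 1 + w := ⟨v - u - 1, by omega⟩
        have : u + 1 + w - u - 1 = w := by omega
        rw [this] at h4
        simp only [M]
        simp only [hQdef] at h4 ⊢
        nlinarith
  have hEsub : ∀ s s', E (s - s') = E s - E s' := by
    intro s s'
    have key : ∀ x y : K, (x - y) ^ Q = x ^ Q - y ^ Q := by
      intro x y; rw [← hQ]; exact sub_pow_char_pow x y _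
    simp only [E, Prod.fst_sub, Prod.snd_sub, Pi.sub_apply, key, WB.mp_sub]
    ring
  obtain ⟨s, s', hne, hs⟩ : ∃ s s', s ≠ s' ∧
      (fun (t : Fin M) => (E s).coeff t) = (fun (t : Fin M) => (E s').coeff t) := by
    apply Fintype.exists_ne_map_eq_of_card_lt
    simp only [Fintype.card_prod, Fintype.card_pi, Finset.prod_const, Finset.card_univ, Fintype.card_fin]
    rw [← pow_add]
    apply Nat.pow_lt_pow_right Fintype.one_lt_card
    obtain ⟨w, rfl⟩ : ∃ w, v = u + 1 + w := ⟨v - u - 1, by omega⟩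
    have : u + 1 + w - u = w + 1 := by omega
    rw [this]
    simp only [M, hQdef, hJ]
    nlinarith
  have hE0 : E (s - s') = 0 := by
    rw [hEsub, sub_eq_zero]
    ext t
    by_cases ht : t < M
    · exact congrFun hs ⟨t, ht⟩
    · rw [coeff_eq_zero_of_degree_lt, coeff_eq_zero_of_degree_lt]
      · exact (hEdeg _).trans_le (by exact_mod_cast not_lt.1 ht)
      · exact (hEdeg _).trans_le (by exact_mod_cast not_lt.1 ht)
  obtain ⟨⟨α, δ⟩, hαδ⟩ : ∃ z, z = s - s' := ⟨_, rfl⟩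
  have hnz : (α, δ) ≠ 0 := by rw [hαδ]; exact sub_ne_zero.2 hne
  rw [← hαδ] at hE0
  set A := WB.mp e1 α with hA
  set D := WB.mp e2 δ with hD
  let ψ := A + D * F ^ (v + 1)
  have hψ : ψ ≠ 0 := by
    intro h
    have h1 : A = - (D * F ^ (v + 1)) := eq_neg_of_add_eq_zero_left h
    by_cases hD0 : D = 0
    · have hA0 : A = 0 := by rw [h1, hD0]; simp
      apply hnz
      refine Prod.ext ?_ ?_
      · funext t
        change α t = 0
        rw [← WB.mp_coeff e1 inj1 α t, ← hA, hA0]; simp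
      · funext t
        change δ t = 0
        rw [← WB.mp_coeff e2 inj2 δ t, ← hD, hD0]; simp
    · have hA0 : A ≠ 0 := by
        rw [h1]; exact neg_ne_zero.2 (mul_ne_zero hD0 (pow_ne_zero _ hF0))
      obtain ⟨⟨⟨j, hj⟩, ⟨i, hi⟩⟩, h2⟩ := WB.mp_natDegree e1 α hA0
      obtain ⟨⟨⟨j', hj'⟩, ⟨i', hi'⟩⟩, h3⟩ := WB.mp_natDegree e2 δ hD0
      have h4 := congrArg natDegree h1
      rw [natDegree_neg, natDegree_mul hD0 (pow_ne_zero _ hF0), natDegree_pow, hF] at h4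
      rw [← hA] at h2
      rw [← hD] at h3
      rw [h2, h3] at h4
      simp only [e1, e2] at h4
      have h5 : j * Q + i = (j' + u) * Q + (i' + u + v + 1) := by
        rw [h4, hQdef]; ring
      have h6 := congrArg (· % Q) h5
      simp only [Nat.mul_add_mod_self_right] at h6
      rw [Nat.mod_eq_of_lt (by omega), Nat.mod_eq_of_lt (by omega)] at h6
      omega
  have hψdeg : ψ.degree < (((v + 2 * u + 1) * Q : ℕ) : WithBot ℕ) := by
    refine (degree_add_le _ _).trans_lt (max_lt ?_ ?_)
    · apply WB.mp_degree_lt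
      rintro ⟨⟨j, hj⟩, ⟨i, hi⟩⟩
      simp only [e1]
      have : (j + 1) * Q ≤ (v + 2 * u + 1) * Q := Nat.mul_le_mul_right _ (by omega)
      have : i < Q := by omega
      nlinarith
    · by_cases hD0 : D = 0
      · rw [hD0, zero_mul, degree_zero]; exact WithBot.bot_lt_coe _
      rw [degree_eq_natDegree (mul_ne_zero hD0 (pow_ne_zero _ hF0)),
        natDegree_mul hD0 (pow_ne_zero _ hF0), natDegree_pow, hF]
      obtain ⟨⟨⟨j', hj'⟩, ⟨i', hi'⟩⟩, h3⟩ := WB.mp_natDegree e2 δ hD0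
      rw [← hD] at h3
      rw [h3]
      simp only [e2]
      have : (j' + u + 1) * Q ≤ (v + 2 * u + 1) * Q := Nat.mul_le_mul_right _ (by omega)
      have h5 : j' * Q + i' + (v + 1) * (2 * u + 1) = (j' + u) * Q + (i' + u + v + 1) := by
        rw [hQdef]; ring
      norm_cast
      rw [h5]
      have : i' + u + v + 1 < Q := by omega
      nlinarith
  have hroot : ∀ x : K, F.eval x ^ (2 * v * (v + 1)) = ε → ψ.eval x = 0 := by
    intro x hx
    have hxq : x ^ (Q * Q) = x := by
      rw [← pow_two, ← hcard]; exact FiniteField.pow_card x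
    have hpow : (ψ.eval x) ^ Q = (E (α, δ)).eval x := by
      have key : ∀ x y : K, (x + y) ^ Q = x ^ Q + y ^ Q := by
        intro x y; rw [← hQ]; exact add_pow_char_pow x y _ _
      have keys : ∀ (n : ℕ) (β : Fin J × Fin n → K),
          ((WB.mp (fun s : Fin J × Fin n => (s.1 : ℕ) * Q + s.2) β).eval x) ^ Q =
          (WB.mp (fun s : Fin J × Fin n => (s.1 : ℕ) + s.2 * Q) (fun t => β t ^ Q)).eval x := by
        intro n β
        simp only [WB.mp, eval_finsetSum, eval_monomial]
        rw [← hQ, sum_pow_char_pow, hQ]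
        apply Finset.sum_congr rfl
        intro t _
        rw [mul_pow, ← pow_mul]
        congr 1
        rw [add_mul, mul_assoc, pow_add, pow_add, mul_comm (t.1 : ℕ), pow_mul, hxq]
      simp only [ψ, E, A, D, eval_add, eval_mul, eval_pow, eval_C, key, mul_pow]
      rw [keys, keys, ← hx, ← pow_mul]
      have : (v + 1) * Q = 2 * v * (v + 1) + (v + 1) := by rw [hQdef]; ring
      rw [this, pow_add]
      ring
    rw [hE0, eval_zero] at hpow
    exact pow_eq_zero_iff (by omega) |>.1 hpow
  have hcardle : (Finset.univ.filter (fun x : K => F.eval x ^ (2 * v * (v + 1)) = ε)).card ≤ ψ.natDegree := by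
    refine le_trans (Finset.card_le_card (t := ψ.roots.toFinset) ?_) ((Multiset.toFinset_card_le _).trans (card_roots' _))
    intro x hx
    simp only [Finset.mem_filter, Finset.mem_univ, true_and] at hx
    simp [hψ, hroot x hx]
  have h7 : ψ.natDegree < (v + 2 * u + 1) * Q := by
    rw [degree_eq_natDegree hψ] at hψdeg
    exact_mod_cast hψdeg
  simp only [hQdef] at h7 ⊢
  nlinarith

/-- power sums bounded by `C R^m` force `|β_i| ≤ R` -/
lemma WB.powersum {ι : Type*} [Fintype ι] (β : ι → ℂ) (C R : ℝ) (hR : 0 < R) (m0 : ℕ)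
    (h : ∀ m, m0 ≤ m → ‖∑ i, β i ^ m‖ ≤ C * R ^ m) (i : ι) : ‖β i‖ ≤ R := by
  classical
  by_contra! hi
  -- unit parts
  have hu : ∀ j, ∃ u : ℂ, ‖u‖ = 1 ∧ β j = ‖β j‖ * u := by
    intro j
    by_cases hj : β j = 0
    · exact ⟨1, by simp, by simp [hj]⟩
    · refine ⟨β j / ‖β j‖, ?_, ?_⟩
      · simp [hj]
      · have : (‖β j‖ : ℂ) ≠ 0 := by simpa using hj
        field_simp
  choose u hu1 hu2 using hu
  -- recurrence
  have hrec : ∀ N : ℕ, ∃ n, N ≤ n ∧ ∀ j, ‖u j ^ n - 1‖ < 1 / 2 := by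
    intro N
    have hc : IsCompact (Metric.closedBall (0 : ι → ℂ) 1) := isCompact_closedBall _ _
    obtain ⟨z, -, φ, hφ, hlim⟩ := hc.tendsto_subseq (x := fun n : ℕ => fun j => u j ^ n) (by
      intro n
      rw [mem_closedBall_zero_iff, pi_norm_le_iff_of_nonneg zero_le_one]
      intro j
      simp [hu1])
    have hcs := hlim.cauchySeq
    rw [Metric.cauchySeq_iff'] at hcs
    obtain ⟨n0, hn0⟩ := hcs (1 / 2) (by norm_num)
    have h1 := hn0 (n0 + N) (by omega)
    have hle : φ n0 + N ≤ φ (n0 + N) := by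
      clear h1
      induction N with
      | zero => simp
      | succ N ih =>
        have := hφ (show n0 + N < n0 + (N + 1) by omega)
        omega
    refine ⟨φ (n0 + N) - φ n0, by omega, fun j => ?_⟩
    have h2 := (dist_le_pi_dist _ _ j).trans_lt h1
    simp only [Function.comp, dist_eq_norm] at h2
    have h3 : u j ^ φ (n0 + N) - u j ^ φ n0 = u j ^ φ n0 * (u j ^ (φ (n0 + N) - φ n0) - 1) := by
      rw [mul_sub, ← pow_add, mul_one]; congr 2; omega
    rw [h3, norm_mul, norm_pow, hu1, one_pow, one_mul] at h2
    exact h2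
  have hlow : ∀ n, (∀ j, ‖u j ^ n - 1‖ < 1 / 2) → ‖β i‖ ^ n / 2 ≤ ‖∑ j, β j ^ n‖ := by
    intro n hn
    refine le_trans ?_ (Complex.re_le_norm _)
    rw [Complex.re_sum]
    have hterm : ∀ j, ‖β j‖ ^ n / 2 ≤ (β j ^ n).re := by
      intro j
      have h1 : β j ^ n = ((‖β j‖ ^ n : ℝ) : ℂ) * u j ^ n := by
        conv_lhs => rw [hu2 j, mul_pow]
        push_cast; rfl
      rw [h1, Complex.re_ofReal_mul]
      have h2 : 1 / 2 ≤ (u j ^ n).re := by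
        have := (abs_le.1 ((Complex.abs_re_le_norm (u j ^ n - 1)).trans (hn j).le)).1
        simp only [Complex.sub_re, Complex.one_re] at this
        linarith
      nlinarith [pow_nonneg (norm_nonneg (β j)) n]
    refine (hterm i).trans (Finset.single_le_sum (f := fun j => (β j ^ n).re) (fun j _ => ?_) (Finset.mem_univ i))
    exact le_trans (by positivity) (hterm j)
  have hgrow : Filter.Tendsto (fun n : ℕ => (‖β i‖ / R) ^ n) Filter.atTop Filter.atTop :=
    tendsto_pow_atTop_atTop_of_one_lt ((one_lt_div hR).2 hi)
  obtain ⟨N, hN⟩ := (Filter.tendsto_atTop.1 hgrow (2 * C + 1)).exists_forall_of_atTop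
  obtain ⟨n, hn, hn2⟩ := hrec (max N m0)
  have h1 := hN n ((le_max_left _ _).trans hn)
  have h2 := (hlow n hn2).trans (h n ((le_max_right _ _).trans hn))
  rw [div_pow, le_div_iff₀ (by positivity)] at h1
  have : 0 < R ^ n := by positivity
  nlinarith

/-- Newton's identities: the sequence `S` is given by power sums. -/
lemma WB.newton (N : ℕ) (c S : ℕ → ℤ) (h0 : c 0 = 1) (hc : ∀ n, N < n → c n = 0)
    (hS : ∀ n : ℕ, (n : ℤ) * c n = ∑ r ∈ Finset.Icc 1 n, S r * c (n - r)) :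
    ∃ α : Fin N → ℂ, ∀ r, 1 ≤ r → (S r : ℂ) = - ∑ i, α i ^ r := by
  classical
  let L : ℂ[X] := ∑ n ∈ Finset.range (N + 1), monomial (N - n) (c n : ℂ)
  have hLc : ∀ n ≤ N, L.coeff (N - n) = c n := by
    intro n hn
    simp only [L, finsetSum_coeff, coeff_monomial]
    rw [Finset.sum_eq_single n]
    · simp
    · intro b hb hbn
      rw [if_neg]
      have := Finset.mem_range.1 hb
      omega
    · intro h; exact absurd (Finset.mem_range.2 (by omega)) h
  have hLd : L.natDegree ≤ N := by
    apply natDegree_sum_le_of_forall_le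
    intro n _
    exact (natDegree_monomial_le _).trans (Nat.sub_le _ _)
  have hLm : L.Monic := by
    apply monic_of_natDegree_le_of_coeff_eq_one N hLd
    simpa [h0] using hLc 0 (Nat.zero_le _)
  have hLN : L.natDegree = N := by
    apply le_antisymm hLd
    apply le_natDegree_of_ne_zero
    have := hLc 0 (Nat.zero_le _)
    rw [Nat.sub_zero] at this
    rw [this, h0]; simp
  have hsplit : L.Splits := IsAlgClosed.splits L
  have hroots : L.roots.card = N := by rw [← hLN]; exact hsplit.natDegree_eq_card_roots.symm
  obtain ⟨α, hα⟩ : ∃ α : Fin N → ℂ, Finset.univ.val.map α = L.roots := by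
    have hl : L.roots.toList.length = N := by simp [hroots]
    refine ⟨fun i => L.roots.toList.get (i.cast hl.symm), ?_⟩
    conv_rhs => rw [← Multiset.coe_toList L.roots]
    rw [Fin.univ_def]
    simp only [Multiset.map_coe]
    congr 1
    apply List.ext_get
    · simp [hroots]
    · intro n h1 h2; simp
  -- coefficients
  have hes : ∀ n, (c n : ℂ) = (-1) ^ n * MvPolynomial.aeval α (MvPolynomial.esymm (Fin N) ℂ n) := by
    intro n
    rw [MvPolynomial.aeval_esymm_eq_multiset_esymm, hα]
    by_cases hn : n ≤ N
    · rw [← hLc n hn, Polynomial.coeff_eq_esymm_roots_of_card (by rw [hroots, hLN]) (by rw [hLN]; omega)]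
      rw [hLm.leadingCoeff, one_mul, hLN]
      congr <;> omega
    · rw [hc n (by omega)]
      rw [Multiset.esymm, Multiset.powersetCard_eq_empty _ (by omega)]
      simp
  refine ⟨α, fun r => ?_⟩
  induction r using Nat.strong_induction_on with
  | _ n ih =>
  intro hn
  have hps : ∀ r, MvPolynomial.aeval α (MvPolynomial.psum (Fin N) ℂ r) = ∑ i, α i ^ r := by
    intro r; simp [MvPolynomial.psum]
  have hN := congrArg (MvPolynomial.aeval α) (MvPolynomial.mul_esymm_eq_sum (Fin N) ℂ n)
  simp only [map_mul, map_sum, map_pow, map_neg, map_one, map_natCast, hps] at hN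
  have h1 := congrArg (Int.cast : ℤ → ℂ) (hS n)
  push_cast at h1
  -- both sums in the same form
  have h2 : (n : ℂ) * c n = - ∑ r ∈ Finset.Icc 1 n, (∑ i, α i ^ r) * c (n - r) := by
    rw [hes n, mul_left_comm, hN]
    rw [← mul_assoc, ← pow_add, show n + (n + 1) = 2 * n + 1 by ring, pow_succ, pow_mul]
    simp only [neg_one_sq, one_pow, one_mul, neg_mul, neg_inj]
    symm
    refine Finset.sum_bij (fun r _ => (n - r, r)) ?_ ?_ ?_ ?_
    · intro r hr
      have := Finset.mem_Icc.1 hr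
      simp only [Finset.mem_filter, Finset.HasAntidiagonal.mem_antidiagonal]; omega
    · intro r hr r' hr' h
      exact (Prod.ext_iff.1 h).2
    · rintro ⟨x, y⟩ h
      simp only [Finset.mem_filter, Finset.HasAntidiagonal.mem_antidiagonal] at h
      refine ⟨y, Finset.mem_Icc.2 (by omega), ?_⟩
      ext <;> simp; omega
    · intro r hr
      rw [hes (n - r)]; ring
  rw [h1, ← Finset.sum_neg_distrib] at h2
  obtain ⟨k, rfl⟩ : ∃ k, n = k + 1 := ⟨n - 1, by omega⟩
  rw [Finset.sum_Icc_succ_top (by omega), Finset.sum_Icc_succ_top (by omega)] at h2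
  have h3 : ∑ r ∈ Finset.Icc 1 k, (S r : ℂ) * c (k + 1 - r) =
      ∑ r ∈ Finset.Icc 1 k, -((∑ i, α i ^ r) * (c (k + 1 - r) : ℂ)) := by
    apply Finset.sum_congr rfl
    intro r hr
    have := Finset.mem_Icc.1 hr
    rw [ih r (by omega) (by omega)]; ring
  rw [h3] at h2
  have h4 := add_left_cancel h2
  simpa [h0] using h4

noncomputable instance WB.ft (p r : ℕ) [Fact p.Prime] : Fintype (GaloisField p r) :=
  Fintype.ofFinite _

/-- the characteristic polynomial of `x`, as a power of the minimal polynomial -/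
noncomputable def WB.w (p : ℕ) [Fact p.Prime] {K : Type*} [Field K] [Algebra (ZMod p) K] (x : K) :
    (ZMod p)[X] :=
  minpoly (ZMod p) x ^ (Module.finrank (ZMod p) K / (minpoly (ZMod p) x).natDegree)

lemma WB.count_minpoly (p : ℕ) [Fact p.Prime] {K : Type*} [Field K] [Fintype K] [Algebra (ZMod p) K]
    [DecidableEq (ZMod p)[X]]
    (P : (ZMod p)[X]) (hP : Irreducible P) (hm : P.Monic) :
    (Finset.univ.filter (fun x : K => minpoly (ZMod p) x = P)).card =
      if P.natDegree ∣ Module.finrank (ZMod p) K then P.natDegree else 0 := by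
  classical
  split_ifs with h
  · have : Fact (Irreducible P) := ⟨hP⟩
    have hfr : Module.finrank (ZMod p) (AdjoinRoot P) = P.natDegree := by
      rw [(AdjoinRoot.powerBasis hP.ne_zero).finrank, AdjoinRoot.powerBasis_dim]
    obtain ⟨φ⟩ := FiniteField.nonempty_algHom_of_finrank_dvd (F := ZMod p) (K := AdjoinRoot P) (L := K)
      (by rw [hfr]; exact h)
    have hx0 : aeval (φ (AdjoinRoot.root P)) P = 0 := by
      rw [aeval_algHom_apply]; simp
    have hmin : P = minpoly (ZMod p) (φ (AdjoinRoot.root P)) :=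
      minpoly.eq_of_irreducible_of_monic hP hx0 hm
    have hsplit : (P.map (algebraMap (ZMod p) K)).Splits := by
      rw [hmin]; exact Normal.splits inferInstance _
    have hsep : P.Separable := PerfectField.separable_of_irreducible hP
    rw [← card_rootSet_eq_natDegree hsep hsplit, ← Set.toFinset_card]
    congr 1
    ext x
    simp only [Finset.mem_filter, Finset.mem_univ, true_and, Set.mem_toFinset, mem_rootSet, ne_eq,
      hP.ne_zero, not_false_eq_true]
    constructor
    · rintro rfl; exact minpoly.aeval _ _
    · intro hx
      exact (minpoly.eq_of_irreducible_of_monic hP hx hm).symm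
  · rw [Finset.card_eq_zero, Finset.filter_eq_empty_iff]
    rintro x - rfl
    exact h (minpoly.degree_dvd (Algebra.IsIntegral.isIntegral x))

lemma WB.count_dvd (p : ℕ) [Fact p.Prime] [DecidableRel (fun a b : (ZMod p)[X] => a ∣ b)] (g : (ZMod p)[X]) (hg : g.Monic) :
    ∑ r ∈ Finset.Icc 1 g.natDegree,
      (Finset.univ.filter (fun x : GaloisField p r => WB.w p x ∣ g)).card = g.natDegree := by
  classical
  set n := g.natDegree with hn
  set T := (UniqueFactorizationMonoid.normalizedFactors g).toFinset with hT
  have hg0 := hg.ne_zero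
  have hTmem : ∀ P, P ∈ T ↔ Irreducible P ∧ P.Monic ∧ P ∣ g := by
    intro P
    rw [hT, Multiset.mem_toFinset, UniqueFactorizationMonoid.mem_normalizedFactors_iff' hg0]
    constructor
    · rintro ⟨h1, h2, h3⟩
      exact ⟨h1, by rw [← h2]; exact Polynomial.monic_normalize h1.ne_zero, h3⟩
    · rintro ⟨h1, h2, h3⟩
      exact ⟨h1, h2.normalize_eq_self, h3⟩
  have hdeg : ∑ P ∈ T, (UniqueFactorizationMonoid.normalizedFactors g).count P * P.natDegree = n := by
    have h1 : (UniqueFactorizationMonoid.normalizedFactors g).prod.natDegree = n := by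
      apply natDegree_eq_of_degree_eq
      exact degree_eq_degree_of_associated (UniqueFactorizationMonoid.prod_normalizedFactors hg0)
    rw [← h1, natDegree_multiset_prod, Finset.sum_multiset_map_count]
    · simp [hT]
    · exact UniqueFactorizationMonoid.zero_notMem_normalizedFactors g
  have hstep : ∀ r ∈ Finset.Icc 1 n,
      (Finset.univ.filter (fun x : GaloisField p r => WB.w p x ∣ g)).card =
      ∑ P ∈ T, if P.natDegree ∣ r ∧ P ^ (r / P.natDegree) ∣ g then P.natDegree else 0 := by
    intro r hr
    have hr1 := (Finset.mem_Icc.1 hr).1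
    have hfr : Module.finrank (ZMod p) (GaloisField p r) = r := GaloisField.finrank p (by omega)
    rw [Finset.card_eq_sum_card_fiberwise (f := fun x => minpoly (ZMod p) x) (t := T)]
    · apply Finset.sum_congr rfl
      intro P hP
      obtain ⟨h1, h2, h3⟩ := (hTmem P).1 hP
      rw [Finset.filter_filter]
      by_cases hd : P ^ (r / P.natDegree) ∣ g
      · have := WB.count_minpoly p (K := GaloisField p r) P h1 h2
        rw [hfr] at this
        simp only [hd, and_true]
        rw [← this]
        congr 1
        ext x
        simp only [Finset.mem_filter, Finset.mem_univ, true_and, and_iff_right_iff_imp]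
        rintro rfl
        rw [WB.w, hfr]; exact hd
      · rw [if_neg (fun h => hd h.2), Finset.card_eq_zero, Finset.filter_eq_empty_iff]
        rintro x - ⟨h4, rfl⟩
        rw [WB.w, hfr] at h4
        exact hd h4
    · intro x hx
      simp only [Finset.coe_filter, Finset.mem_univ, true_and, Set.mem_ofPred_eq] at hx
      have hi : IsIntegral (ZMod p) x := Algebra.IsIntegral.isIntegral x
      refine (hTmem _).2 ⟨minpoly.irreducible hi, minpoly.monic hi, ?_⟩
      refine dvd_trans (dvd_pow_self _ ?_) hx
      have hdd := minpoly.degree_dvd hi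
      rw [hfr] at hdd ⊢
      exact (Nat.div_pos (Nat.le_of_dvd (by omega) hdd) (minpoly.natDegree_pos hi)).ne'
  rw [Finset.sum_congr rfl hstep, Finset.sum_comm]
  conv_rhs => rw [← hdeg]
  apply Finset.sum_congr rfl
  intro P hP
  obtain ⟨h1, h2, h3⟩ := (hTmem P).1 hP
  have hd0 : 0 < P.natDegree := h1.natDegree_pos
  rw [← Finset.sum_filter, Finset.sum_const, smul_eq_mul]
  congr 1
  have hmul : ∀ j, P ^ j ∣ g ↔ j ≤ (UniqueFactorizationMonoid.normalizedFactors g).count P := by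
    intro j
    rw [pow_dvd_iff_le_emultiplicity,
      UniqueFactorizationMonoid.emultiplicity_eq_count_normalizedFactors h1 hg0, h2.normalize_eq_self]
    norm_cast
  have hle : ∀ j, P ^ j ∣ g → j * P.natDegree ≤ n := by
    intro j hj
    have := natDegree_le_of_dvd hj hg0
    rwa [natDegree_pow] at this
  have hcI : (Finset.Icc 1 ((UniqueFactorizationMonoid.normalizedFactors g).count P)).card =
      (UniqueFactorizationMonoid.normalizedFactors g).count P := by simp
  conv_rhs => rw [← hcI]
  symm
  refine Finset.card_bij (fun j _ => j * P.natDegree) ?_ ?_ ?_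
  · intro j hj
    rw [Finset.mem_Icc] at hj
    have hj2 := (hmul j).2 hj.2
    rw [Finset.mem_filter, Finset.mem_Icc, Nat.mul_div_cancel _ hd0]
    exact ⟨⟨Nat.mul_pos hj.1 hd0, hle j hj2⟩, dvd_mul_left _ _, hj2⟩
  · intro j _ j' _ h
    exact Nat.eq_of_mul_eq_mul_right hd0 h
  · intro r hr
    rw [Finset.mem_filter, Finset.mem_Icc] at hr
    obtain ⟨⟨hr1, hr2⟩, ⟨j, rfl⟩, hr4⟩ := hr
    rw [Nat.mul_div_cancel_left _ hd0] at hr4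
    refine ⟨j, Finset.mem_Icc.2 ⟨?_, (hmul j).1 hr4⟩, by ring⟩
    rcases Nat.eq_zero_or_pos j with rfl | h
    · simp at hr1
    · exact h

/-- monic polynomials of degree `n` -/
noncomputable def WB.Mon (p : ℕ) [Fact p.Prime] (n : ℕ) : Finset (ZMod p)[X] := by
  classical
  exact (Finset.univ : Finset (Fin n → ZMod p)).image (fun c => X ^ n + ∑ i : Fin n, C (c i) * X ^ (i : ℕ))

lemma WB.mem_Mon (p : ℕ) [Fact p.Prime] (n : ℕ) (g : (ZMod p)[X]) :
    g ∈ WB.Mon p n ↔ g.Monic ∧ g.natDegree = n := by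
  classical
  simp only [WB.Mon, Finset.mem_image, Finset.mem_univ, true_and]
  constructor
  · rintro ⟨c, rfl⟩
    have hd : (∑ i : Fin n, C (c i) * X ^ (i : ℕ)).degree < (n : WithBot ℕ) := by
      rw [← mem_degreeLT]
      apply Submodule.sum_mem
      intro i _
      rw [mem_degreeLT]
      exact (degree_C_mul_X_pow_le _ _).trans_lt (by exact_mod_cast i.2)
    refine ⟨monic_X_pow_add hd, natDegree_eq_of_degree_eq_some ?_⟩
    rw [degree_add_eq_left_of_degree_lt (by rwa [degree_X_pow]), degree_X_pow]
  · rintro ⟨h1, rfl⟩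
    refine ⟨fun i => g.coeff i, ?_⟩
    rw [Fin.sum_univ_eq_sum_range (fun i => C (g.coeff i) * X ^ i)]
    exact h1.as_sum.symm

/-- the character attached to the points `a i` -/
noncomputable def WB.ch {p : ℕ} [Fact p.Prime] {ι : Type*} [Fintype ι] (a : ι → ZMod p) (g : (ZMod p)[X]) : ℤ :=
  ∏ i, quadraticChar (ZMod p) (g.eval (a i))

lemma WB.ch_mul {p : ℕ} [Fact p.Prime] {ι : Type*} [Fintype ι] (a : ι → ZMod p) (g h : (ZMod p)[X]) :
    WB.ch a (g * h) = WB.ch a g * WB.ch a h := by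
  simp only [WB.ch, eval_mul, map_mul, Finset.prod_mul_distrib]

/-- coefficients of the L-function -/
noncomputable def WB.c {p : ℕ} [Fact p.Prime] {ι : Type*} [Fintype ι] (a : ι → ZMod p) (n : ℕ) : ℤ :=
  ∑ g ∈ WB.Mon p n, WB.ch a g

/-- the character sums over the extensions -/
noncomputable def WB.S {p : ℕ} [Fact p.Prime] {ι : Type*} [Fintype ι] (a : ι → ZMod p) (r : ℕ) : ℤ :=
  ∑ x : GaloisField p r, WB.ch a (WB.w p x)

lemma WB.c_zero {p : ℕ} [Fact p.Prime] {ι : Type*} [Fintype ι] (a : ι → ZMod p) : WB.c a 0 = 1 := by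
  have : WB.Mon p 0 = {1} := by
    ext g
    rw [WB.mem_Mon, Finset.mem_singleton]
    constructor
    · rintro ⟨h1, h2⟩; exact h1.natDegree_eq_zero.1 h2
    · rintro rfl; simp
  simp [WB.c, this, WB.ch]

lemma WB.c_eq_zero {p : ℕ} [Fact p.Prime] (hp : p ≠ 2) {ι : Type*} [Fintype ι] [Nonempty ι] (a : ι → ZMod p)
    (ha : Function.Injective a) (n : ℕ) (hn : Fintype.card ι ≤ n) : WB.c a n = 0 := by
  classical
  have i0 : ι := Classical.arbitrary ι
  obtain ⟨b, hb⟩ := FiniteField.exists_nonsquare (F := ZMod p) (by rw [ZMod.ringChar_zmod_n]; exact hp)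
  have hb0 : b ≠ 0 := by rintro rfl; exact hb (IsSquare.zero)
  have hχ : quadraticChar (ZMod p) b = -1 := quadraticChar_neg_one_iff_not_isSquare.2 hb
  let l : (ZMod p)[X] := Lagrange.basis Finset.univ a i0
  have hl1 : l.eval (a i0) = 1 := Lagrange.eval_basis_self ha.injOn (Finset.mem_univ _)
  have hl2 : ∀ i, i ≠ i0 → l.eval (a i) = 0 := fun i hi =>
    Lagrange.eval_basis_of_ne (Ne.symm hi) (Finset.mem_univ _)
  have hld : l.degree < n := by
    rw [Lagrange.degree_basis ha.injOn (Finset.mem_univ _)]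
    have : 0 < Fintype.card ι := Fintype.card_pos
    rw [Finset.card_univ]
    exact_mod_cast (by omega : Fintype.card ι - 1 < n)
  let σ : (ZMod p)[X] → (ZMod p)[X] := fun g => g + C ((b - 1) * g.eval (a i0)) * l
  have hσ0 : ∀ g, (σ g).eval (a i0) = b * g.eval (a i0) := by
    intro g; simp only [σ, eval_add, eval_mul, eval_C, hl1]; ring
  have hσ1 : ∀ g i, i ≠ i0 → (σ g).eval (a i) = g.eval (a i) := by
    intro g i hi; simp only [σ, eval_add, eval_mul, eval_C, hl2 i hi]; ring
  have hσch : ∀ g, WB.ch a (σ g) = - WB.ch a g := by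
    intro g
    rw [WB.ch, WB.ch, ← Finset.mul_prod_erase _ _ (Finset.mem_univ i0),
      ← Finset.mul_prod_erase Finset.univ (fun i => quadraticChar (ZMod p) (g.eval (a i))) (Finset.mem_univ i0), hσ0, map_mul, hχ]
    rw [Finset.prod_congr rfl (fun i hi => by rw [hσ1 g i (Finset.ne_of_mem_erase hi)])]
    ring
  have hσinj : Function.Injective σ := by
    intro g h hgh
    have h1 : g.eval (a i0) = h.eval (a i0) := by
      have := congrArg (eval (a i0)) hgh
      rw [hσ0, hσ0] at this
      exact mul_left_cancel₀ hb0 this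
    simp only [σ, h1] at hgh
    exact add_right_cancel hgh
  have hσM : ∀ g ∈ WB.Mon p n, σ g ∈ WB.Mon p n := by
    intro g hg
    rw [WB.mem_Mon] at hg ⊢
    have hd : (C ((b - 1) * g.eval (a i0)) * l).degree < g.degree := by
      rw [degree_eq_natDegree hg.1.ne_zero, hg.2]
      refine (degree_mul_le _ _).trans_lt ?_
      refine lt_of_le_of_lt (add_le_add_left degree_C_le _) ?_
      simpa using hld
    refine ⟨hg.1.add_of_left hd, ?_⟩
    rw [natDegree_eq_of_degree_eq (degree_add_eq_left_of_degree_lt hd), hg.2]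
  have himg : (WB.Mon p n).image σ = WB.Mon p n := by
    apply Finset.eq_of_subset_of_card_le
    · intro g hg
      obtain ⟨h, hh, rfl⟩ := Finset.mem_image.1 hg
      exact hσM h hh
    · rw [Finset.card_image_of_injective _ hσinj]
  have : WB.c a n = - WB.c a n := by
    conv_lhs => rw [WB.c, ← himg, Finset.sum_image hσinj.injOn]
    rw [WB.c, ← Finset.sum_neg_distrib]
    exact Finset.sum_congr rfl (fun g _ => hσch g)
  omega

lemma WB.w_monic (p : ℕ) [Fact p.Prime] {K : Type*} [Field K] [Fintype K] [Algebra (ZMod p) K] (x : K) :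
    (WB.w p x).Monic ∧ (WB.w p x).natDegree = Module.finrank (ZMod p) K := by
  have hi : IsIntegral (ZMod p) x := Algebra.IsIntegral.isIntegral x
  refine ⟨(minpoly.monic hi).pow _, ?_⟩
  rw [WB.w, natDegree_pow, Nat.div_mul_cancel (minpoly.degree_dvd hi)]

lemma WB.rec {p : ℕ} [Fact p.Prime] {ι : Type*} [Fintype ι] (a : ι → ZMod p) (n : ℕ) :
    (n : ℤ) * WB.c a n = ∑ r ∈ Finset.Icc 1 n, WB.S a r * WB.c a (n - r) := by
  classical
  have h1 : (n : ℤ) * WB.c a n = ∑ g ∈ WB.Mon p n, ∑ r ∈ Finset.Icc 1 n,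
      ∑ x : GaloisField p r, if WB.w p x ∣ g then WB.ch a g else 0 := by
    rw [WB.c, Finset.mul_sum]
    apply Finset.sum_congr rfl
    intro g hg
    rw [WB.mem_Mon] at hg
    have := WB.count_dvd p g hg.1
    rw [hg.2] at this
    conv_lhs => rw [← this]
    push_cast
    rw [Finset.sum_mul]
    apply Finset.sum_congr rfl
    intro r _
    rw [← Finset.sum_filter, Finset.sum_const, nsmul_eq_mul]
  rw [h1, Finset.sum_comm]
  apply Finset.sum_congr rfl
  intro r hr
  rw [Finset.mem_Icc] at hr
  rw [Finset.sum_comm, WB.S, Finset.sum_mul]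
  apply Finset.sum_congr rfl
  intro x _
  obtain ⟨hw1, hw2⟩ := WB.w_monic p x
  rw [GaloisField.finrank p (by omega)] at hw2
  rw [← Finset.sum_filter, WB.c, Finset.mul_sum]
  symm
  refine Finset.sum_bij (fun h _ => WB.w p x * h) ?_ ?_ ?_ ?_
  · intro h hh
    rw [WB.mem_Mon] at hh
    rw [Finset.mem_filter, WB.mem_Mon]
    refine ⟨⟨hw1.mul hh.1, ?_⟩, dvd_mul_right _ _⟩
    rw [hw1.natDegree_mul hh.1, hw2, hh.2]; omega
  · intro h _ h' _ e
    exact mul_left_cancel₀ hw1.ne_zero e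
  · intro g hg
    rw [Finset.mem_filter, WB.mem_Mon] at hg
    obtain ⟨⟨hg1, hg2⟩, h, rfl⟩ := hg
    have hh : h.Monic := hw1.of_mul_monic_left hg1
    refine ⟨h, ?_, rfl⟩
    rw [WB.mem_Mon]
    refine ⟨hh, ?_⟩
    rw [hw1.natDegree_mul hh, hw2] at hg2
    omega
  · intro h _
    rw [WB.ch_mul]

lemma WB.S_one {p : ℕ} [Fact p.Prime] {ι : Type*} [Fintype ι] (a : ι → ZMod p) :
    WB.S a 1 = ∑ x : ZMod p, ∏ i, quadraticChar (ZMod p) (a i - x) := by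
  rw [WB.S, ← (GaloisField.equivZmodP p).symm.toEquiv.sum_comp]
  apply Finset.sum_congr rfl
  intro y _
  have h1 : (GaloisField.equivZmodP p).symm.toEquiv y = algebraMap (ZMod p) (GaloisField p 1) y := by
    simpa using (GaloisField.equivZmodP p).symm.commutes y
  rw [h1, WB.w, minpoly.eq_X_sub_C, natDegree_X_sub_C, GaloisField.finrank p one_ne_zero]
  simp only [WB.ch, Nat.div_self, zero_lt_one, pow_one, eval_sub, eval_X, eval_C]

lemma WB.w_eval (p : ℕ) [Fact p.Prime] {K : Type*} [Field K] [Fintype K] [Algebra (ZMod p) K]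
    (hev : Even (Module.finrank (ZMod p) K)) (x : K) (b : ZMod p) :
    (WB.w p x).eval b = Algebra.norm (ZMod p) (x - algebraMap (ZMod p) K b) := by
  set y := x - algebraMap (ZMod p) K b with hy
  have hi : IsIntegral (ZMod p) x := Algebra.IsIntegral.isIntegral x
  have hiy : IsIntegral (ZMod p) y := Algebra.IsIntegral.isIntegral y
  have hmin : minpoly (ZMod p) y = (minpoly (ZMod p) x).comp (X + C b) := minpoly.sub_algebraMap x b
  have hdeg : (minpoly (ZMod p) y).natDegree = (minpoly (ZMod p) x).natDegree := by
    rw [hmin, natDegree_comp]; simp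
  have hc0 : (minpoly (ZMod p) y).coeff 0 = (minpoly (ZMod p) x).eval b := by
    rw [hmin, coeff_zero_eq_eval_zero, eval_comp]; simp
  have hgen : Algebra.norm (ZMod p) (IntermediateField.AdjoinSimple.gen (ZMod p) y) =
      (-1) ^ (minpoly (ZMod p) y).natDegree * (minpoly (ZMod p) y).coeff 0 := by
    have := Algebra.PowerBasis.norm_gen_eq_coeff_zero_minpoly (IntermediateField.adjoin.powerBasis hiy)
    rwa [IntermediateField.adjoin.powerBasis_gen, IntermediateField.minpoly_gen,
      IntermediateField.adjoin.powerBasis_dim] at this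
  have htower := Module.finrank_mul_finrank (ZMod p) (IntermediateField.adjoin (ZMod p) {y}) K
  rw [IntermediateField.adjoin.finrank hiy] at htower
  have hpos := minpoly.natDegree_pos hiy
  have hdiv : Module.finrank (IntermediateField.adjoin (ZMod p) {y}) K =
      Module.finrank (ZMod p) K / (minpoly (ZMod p) x).natDegree := by
    rw [← htower, ← hdeg, Nat.mul_div_cancel_left _ hpos]
  rw [Algebra.norm_eq_norm_adjoin, hgen, mul_pow, ← pow_mul, htower, hev.neg_one_pow, one_mul, hc0,
    WB.w, eval_pow, hdiv]

lemma WB.ch_cast {p : ℕ} [Fact p.Prime] (hp : p ≠ 2) {K : Type*} [Field K] [Fintype K]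
    [Algebra (ZMod p) K] (v : ℕ) (hev : Even (Module.finrank (ZMod p) K))
    (hcard : Fintype.card K = (2 * v + 1) ^ 2) {ι : Type*} [Fintype ι] (a : ι → ZMod p) (x : K) :
    ((WB.ch a (WB.w p x) : ℤ) : K) =
      ((∏ i, (X - C (algebraMap (ZMod p) K (a i)))).eval x) ^ (2 * v * (v + 1)) := by
  rw [WB.ch, eval_prod, ← Finset.prod_pow]
  push_cast
  apply Finset.prod_congr rfl
  intro i _
  rw [WB.w_eval p hev]
  have h1 := quadraticChar_eq_pow_of_char_ne_two' (F := ZMod p) (by rw [ZMod.ringChar_zmod_n]; exact hp)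
    (Algebra.norm (ZMod p) (x - algebraMap (ZMod p) K (a i)))
  have h2 := congrArg (algebraMap (ZMod p) K) h1
  rw [map_intCast] at h2
  rw [h2, map_pow, FiniteField.algebraMap_norm_eq_pow, ← pow_mul, eval_sub, eval_X, eval_C]
  congr 1
  have hpodd : p % 2 = 1 := (Nat.Prime.eq_two_or_odd (Fact.out : p.Prime)).resolve_left hp
  rw [Nat.card_eq_fintype_card, hcard, Nat.card_eq_fintype_card, ZMod.card]
  have hK : Fintype.card K = p ^ Module.finrank (ZMod p) K := by
    rw [FiniteField.pow_finrank_eq_card]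
  obtain ⟨t, ht⟩ : p - 1 ∣ (2 * v + 1) ^ 2 - 1 := by
    rw [← hcard, hK]; simpa using Nat.sub_dvd_pow_sub_pow p 1 (Module.finrank (ZMod p) K)
  have hp2 := (Fact.out : p.Prime).two_le
  rw [ht, Nat.mul_div_cancel_left _ (by omega)]
  obtain ⟨s, hs⟩ : ∃ s, p = 2 * s + 1 := ⟨p / 2, by omega⟩
  rw [hs] at ht ⊢
  have e1 : (2 * v + 1) ^ 2 - 1 = 2 * (2 * v * (v + 1)) := by
    rw [Nat.sub_eq_iff_eq_add (Nat.one_le_pow _ _ (by omega))]; ring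
  have e2 : (2 * s + 1) / 2 = s := by omega
  rw [e1, Nat.add_sub_cancel] at ht
  rw [e2]
  nlinarith

lemma WB.S_bound {p : ℕ} [Fact p.Prime] (hp : p ≠ 2) {ι : Type*} [Fintype ι] (a : ι → ZMod p)
    (u v m : ℕ) (hm : 0 < m) (hu : Fintype.card ι = 2 * u + 1) (hv : p ^ m = 2 * v + 1) (huv : u < v) :
    |WB.S a (2 * m)| ≤ 3 * (2 * u + 1) * (2 * v + 1) := by
  classical
  let K := GaloisField p (2 * m)
  have hfr : Module.finrank (ZMod p) K = 2 * m := GaloisField.finrank p (by omega)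
  have hcard : Fintype.card K = (2 * v + 1) ^ 2 := by
    rw [← hv, ← pow_mul, ← Nat.card_eq_fintype_card, mul_comm m]; exact GaloisField.card p _ (by omega)
  let F : K[X] := ∏ i, (X - C (algebraMap (ZMod p) K (a i)))
  have hFd : F.natDegree = 2 * u + 1 := by
    rw [natDegree_prod_of_monic _ _ (fun i _ => monic_X_sub_C _)]
    simp [hu]
  have hF0 : F ≠ 0 := by intro h; rw [h] at hFd; simp at hFd
  have hch : ∀ x : K, ((WB.ch a (WB.w p x) : ℤ) : K) = F.eval x ^ (2 * v * (v + 1)) := fun x =>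
    WB.ch_cast hp v (by rw [hfr]; exact even_two_mul m) hcard a x
  have htri : ∀ x : K, WB.ch a (WB.w p x) = 0 ∨ WB.ch a (WB.w p x) = 1 ∨ WB.ch a (WB.w p x) = -1 := by
    intro x
    rw [WB.ch]
    refine Finset.prod_induction _ (fun z : ℤ => z = 0 ∨ z = 1 ∨ z = -1) ?_ (by simp) ?_
    · rintro z w (rfl | rfl | rfl) (rfl | rfl | rfl) <;> simp
    · intro i _
      by_cases h : eval (a i) (WB.w p x) = 0
      · left; rw [h]; simp
      · right; exact quadraticChar_dichotomy h
  set N0 := Finset.univ.filter (fun x : K => WB.ch a (WB.w p x) = 0) with hN0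
  set N1 := Finset.univ.filter (fun x : K => WB.ch a (WB.w p x) = 1) with hN1
  set N2 := Finset.univ.filter (fun x : K => WB.ch a (WB.w p x) = -1) with hN2
  have hb1 : 2 * N1.card ≤ (2 * v + 1) ^ 2 + 2 * (2 * u + 1) * (2 * v + 1) := by
    refine le_trans (Nat.mul_le_mul_left 2 (Finset.card_le_card ?_)) (WB.stepanov p m u v hv hcard F hFd huv 1)
    intro x hx
    simp only [hN1, Finset.mem_filter, Finset.mem_univ, true_and] at hx ⊢
    rw [← hch, hx]; simp
  have hb2 : 2 * N2.card ≤ (2 * v + 1) ^ 2 + 2 * (2 * u + 1) * (2 * v + 1) := by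
    refine le_trans (Nat.mul_le_mul_left 2 (Finset.card_le_card ?_)) (WB.stepanov p m u v hv hcard F hFd huv (-1))
    intro x hx
    simp only [hN2, Finset.mem_filter, Finset.mem_univ, true_and] at hx ⊢
    rw [← hch, hx]; simp
  have hb0 : N0.card ≤ 2 * u + 1 := by
    rw [← hFd]
    refine le_trans (Finset.card_le_card (t := F.roots.toFinset) ?_) ((Multiset.toFinset_card_le _).trans (card_roots' _))
    intro x hx
    simp only [hN0, Finset.mem_filter, Finset.mem_univ, true_and] at hx
    have := hch x
    rw [hx, Int.cast_zero] at this
    simp only [Multiset.mem_toFinset, mem_roots', IsRoot]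
    have hv0 : 0 < v := by omega
    have hexp : 2 * v * (v + 1) ≠ 0 := by positivity
    exact ⟨hF0, (pow_eq_zero_iff hexp).1 this.symm⟩
  have htot : (N0.card : ℤ) + N1.card + N2.card = (2 * v + 1) ^ 2 := by
    have : (∑ x : K, (1 : ℤ)) = (2 * v + 1) ^ 2 := by
      simp [hcard]
    rw [← this, hN0, hN1, hN2, Finset.card_filter, Finset.card_filter, Finset.card_filter]
    push_cast
    rw [← Finset.sum_add_distrib, ← Finset.sum_add_distrib]
    apply Finset.sum_congr rfl
    intro x _
    rcases htri x with h | h | h <;> simp [h]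
  have hS : WB.S a (2 * m) = N1.card - N2.card := by
    rw [WB.S, hN1, hN2, Finset.card_filter, Finset.card_filter]
    push_cast
    rw [← Finset.sum_sub_distrib]
    apply Finset.sum_congr rfl
    intro x _
    rcases htri x with h | h | h <;> simp [h]
  zify at hb0 hb1 hb2
  rw [hS, abs_le]
  have : (0 : ℤ) ≤ (2 * u + 1) * (2 * v) := by positivity
  constructor <;> nlinarith

lemma WB.odd_case {p : ℕ} [Fact p.Prime] (hp : p ≠ 2) {ι : Type*} [Fintype ι] (a : ι → ZMod p)
    (ha : Function.Injective a) (u : ℕ) (hu : Fintype.card ι = 2 * u + 1) :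
    (|∑ x : ZMod p, ∏ i, quadraticChar (ZMod p) (a i - x)| : ℝ) ≤ 2 * u * Real.sqrt p := by
  have hne : Nonempty ι := by
    rw [← Fintype.card_pos_iff]; omega
  have hpp : p.Prime := Fact.out
  obtain ⟨α, hα⟩ := WB.newton (2 * u) (WB.c a) (WB.S a) (WB.c_zero a)
    (fun n hn => WB.c_eq_zero hp a ha n (by omega)) (WB.rec a)
  have hp0 : (0 : ℝ) < p := by exact_mod_cast hpp.pos
  have hαle : ∀ i, ‖α i‖ ≤ Real.sqrt p := by
    intro i
    have h1 : ‖α i ^ 2‖ ≤ (p : ℝ) := by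
      refine WB.powersum (fun i => α i ^ 2) (3 * (2 * u + 1)) p hp0 (2 * u + 2) ?_ i
      intro m hm
      have h2 := hα (2 * m) (by omega)
      have h3 : ∑ i, (α i ^ 2) ^ m = - ((WB.S a (2 * m) : ℤ) : ℂ) := by
        rw [h2, neg_neg]; simp only [pow_mul]
      rw [h3, norm_neg, Complex.norm_intCast]
      have hodd : Odd (p ^ m) := (hpp.odd_of_ne_two hp).pow
      obtain ⟨v, hv⟩ := hodd
      have hlt : m < p ^ m := Nat.lt_pow_self hpp.one_lt
      have h4 := WB.S_bound hp a u v m (by omega) hu hv (by omega)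
      have h5 : ((p : ℝ)) ^ m = 2 * v + 1 := by exact_mod_cast hv
      rw [h5]
      exact_mod_cast h4
    rw [norm_pow] at h1
    exact Real.le_sqrt_of_sq_le h1
  have h1 := hα 1 le_rfl
  rw [WB.S_one] at h1
  have h2 : (|∑ x : ZMod p, ∏ i, quadraticChar (ZMod p) (a i - x)| : ℝ) = ‖∑ i, α i ^ 1‖ := by
    rw [← norm_neg, ← h1, Complex.norm_intCast]
    push_cast; rfl
  rw [h2]
  refine (norm_sum_le _ _).trans ?_
  simp only [pow_one]
  refine (Finset.sum_le_sum (fun i _ => hαle i)).trans ?_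
  simp

lemma WB.odd_case' {p : ℕ} [Fact p.Prime] (hp : p ≠ 2) {ι : Type*} [Fintype ι] (a : ι → ZMod p)
    (ha : Function.Injective a) (u : ℕ) (hu : Fintype.card ι = 2 * u + 1) :
    |∑ x : ZMod p, ∏ i, (quadraticChar (ZMod p) (x - a i) : ℝ)| ≤ 2 * u * Real.sqrt p := by
  refine le_trans (le_of_eq ?_) (WB.odd_case hp a ha u hu)
  have h : ∀ x, ∏ i, (quadraticChar (ZMod p) (x - a i) : ℝ) =
      (quadraticChar (ZMod p) (-1) : ℝ) ^ (2 * u + 1) * ∏ i, (quadraticChar (ZMod p) (a i - x) : ℝ) := by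
    intro x
    rw [← hu, ← Finset.card_univ, ← Finset.prod_const, ← Finset.prod_mul_distrib]
    apply Finset.prod_congr rfl
    intro i _
    rw [← Int.cast_mul, ← map_mul]
    congr 2; ring
  simp only [h]
  rw [← Finset.mul_sum, abs_mul, abs_pow]
  rcases quadraticChar_dichotomy (F := ZMod p) (a := -1) (by simp) with h | h <;> rw [h] <;> simp

theorem stmt_6 (p : ℕ) [Fact p.Prime] (hp : p ≠ 2) (k : ℕ) (hk : 0 < k)
    (a : Fin k → ZMod p) (hinj : Function.Injective a) :
    (|∑ x : ZMod p, ∏ i : Fin k, quadraticChar (ZMod p) (x - a i)| : ℝ) ≤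
      ((k : ℝ) - 1) * Real.sqrt p := by
  classical
  rcases Nat.even_or_odd' k with ⟨u, rfl | rfl⟩
  swap
  · refine (WB.odd_case' hp a hinj u (by simp)).trans (le_of_eq ?_)
    push_cast; ring
  obtain ⟨w, rfl⟩ : ∃ w, u = w + 1 := ⟨u - 1, by omega⟩
  have hpp : p.Prime := Fact.out
  set χ := quadraticChar (ZMod p) with hχ
  set b := a 0 with hb
  let ι := {i : Fin (2 * (w + 1)) // i ≠ 0}
  let e : ι → ZMod p := fun i => (a i.1 - b)⁻¹
  have hab : ∀ i : ι, a i.1 - b ≠ 0 := fun i => sub_ne_zero.2 (fun h => i.2 (hinj h))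
  have he : Function.Injective e := by
    intro i j h
    have := inv_injective h
    exact Subtype.ext (hinj (sub_left_injective this))
  have hcardι : Fintype.card ι = 2 * w + 1 := by
    simp only [ι, Fintype.card_subtype_compl, Fintype.card_fin, Fintype.card_subtype_eq]; omega
  have hmain := WB.odd_case' hp e he w hcardι
  rw [← hχ] at hmain
  let κ : ℝ := ∏ i : ι, (χ (-(a i.1 - b)) : ℝ)
  have hχ1 : ∀ z : ZMod p, |(χ z : ℝ)| ≤ 1 := by
    intro z
    by_cases hz : z = 0
    · rw [hz, MulChar.map_zero]; simp
    · rcases quadraticChar_dichotomy hz with h | h <;> rw [hχ, h] <;> simp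
  have hprod1 : ∀ f : ι → ZMod p, |∏ i, (χ (f i) : ℝ)| ≤ 1 := by
    intro f
    rw [Finset.abs_prod]
    exact Finset.prod_le_one (fun _ _ => abs_nonneg _) (fun _ _ => hχ1 _)
  -- the key transformation
  have hkey : ∀ t : ZMod p, t ≠ 0 → ∏ i, (χ ((b + t⁻¹) - a i) : ℝ) = κ * ∏ i : ι, (χ (t - e i) : ℝ) := by
    intro t ht
    rw [← Finset.mul_prod_erase _ _ (Finset.mem_univ 0)]
    have h1 : ∏ i ∈ Finset.univ.erase (0 : Fin (2 * (w + 1))), (χ ((b + t⁻¹) - a i) : ℝ) =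
        ∏ i : ι, (χ ((b + t⁻¹) - a i.1) : ℝ) := by
      apply Finset.prod_subtype
      intro i; simp
    have h2 : ∀ i : ι, (χ ((b + t⁻¹) - a i.1) : ℝ) = (χ t⁻¹ : ℝ) * ((χ (-(a i.1 - b)) : ℝ) * (χ (t - e i) : ℝ)) := by
      intro i
      rw [← Int.cast_mul, ← map_mul, ← Int.cast_mul, ← map_mul]
      congr 2
      have := hab i
      simp only [e]
      field_simp
      ring
    rw [h1, Finset.prod_congr rfl (fun i _ => h2 i), Finset.prod_mul_distrib, Finset.prod_mul_distrib,
      Finset.prod_const, Finset.card_univ, hcardι]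
    have h3 : (χ ((b + t⁻¹) - a 0) : ℝ) = χ t⁻¹ := by rw [← hb]; congr 2; ring
    have h4 : (χ t⁻¹ : ℝ) * (χ t⁻¹ : ℝ) ^ (2 * w + 1) = 1 := by
      rw [← pow_succ', show 2 * w + 1 + 1 = 2 * (w + 1) by ring, pow_mul]
      have : (χ t⁻¹ : ℝ) ^ 2 = 1 := by
        rw [← Int.cast_pow, hχ, quadraticChar_sq_one (inv_ne_zero ht)]; simp
      rw [this, one_pow]
    rw [h3, ← mul_assoc, h4, one_mul]
  have hsum : ∑ x : ZMod p, ∏ i, (χ (x - a i) : ℝ) =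
      κ * (∑ t : ZMod p, ∏ i : ι, (χ (t - e i) : ℝ) - ∏ i : ι, (χ (0 - e i) : ℝ)) := by
    rw [← Finset.add_sum_erase _ _ (Finset.mem_univ b)]
    have h0 : ∏ i, (χ (b - a i) : ℝ) = 0 := by
      apply Finset.prod_eq_zero (Finset.mem_univ 0)
      rw [← hb, sub_self, MulChar.map_zero, Int.cast_zero]
    rw [h0, zero_add, ← Finset.sum_erase_eq_sub (Finset.mem_univ 0), Finset.mul_sum]
    refine Finset.sum_bij' (fun x _ => (x - b)⁻¹) (fun t _ => b + t⁻¹) ?_ ?_ ?_ ?_ ?_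
    · intro x hx
      simpa [sub_eq_zero] using hx
    · intro t ht
      simpa using ht
    · intro x _; simp
    · intro t _; simp
    · intro x hx
      have hx' : (x - b)⁻¹ ≠ 0 := by simpa [sub_eq_zero] using hx
      rw [← hkey _ hx']
      simp
  rw [hsum, abs_mul]
  have h1p : (1 : ℝ) ≤ Real.sqrt p := by
    rw [Real.one_le_sqrt]; exact_mod_cast hpp.one_lt.le
  calc |κ| * |∑ t : ZMod p, ∏ i : ι, (χ (t - e i) : ℝ) - ∏ i : ι, (χ (0 - e i) : ℝ)|
      ≤ 1 * (2 * w * Real.sqrt p + 1) := by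
        apply mul_le_mul (hprod1 _) _ (abs_nonneg _) zero_le_one
        exact (abs_sub _ _).trans (add_le_add hmain (hprod1 _))
    _ ≤ _ := by push_cast; nlinarith
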